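/- Let 0 < α < 1 and let λ be a nonzero real number. Then (iλ)^α = (1/Γ(−α)) ∫_0^∞ (e^{−itλ} − 1) t^{−1−α} dt, where (iλ)^α denotes the principal branch of the complex power, Γ is the Gamma function, and the (complex-valued) integral converges absolutely. -/

import Mathlib

open MeasureTheory Set

open Filter Topology

/-- On the right half-plane, `w ↦ exp (-w)` is `1`-Lipschitz at the origin. -/
lemma norm_exp_neg_sub_one_le_norm {w : ℂ} (hw : 0 ≤ w.re) :
    ‖Complex.exp (-w) - 1‖ ≤ ‖w‖ := by
  have h := (convex_halfSpace_re_ge 0).norm_image_sub_le_of_norm_hasDerivWithin_le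
    (f := fun z : ℂ => Complex.exp (-z)) (f' := fun z => Complex.exp (-z) * -1) (C := 1)
    (x := 0) (y := w)
    (fun z _ => ((hasDerivAt_neg z).cexp).hasDerivWithinAt)
    (fun z hz => by
      have hz' : 0 ≤ z.re := hz
      simpa [Complex.norm_exp] using hz')
    (by simp) hw
  simpa using h

lemma norm_exp_neg_sub_one_le_two {w : ℂ} (hw : 0 ≤ w.re) :
    ‖Complex.exp (-w) - 1‖ ≤ 2 := by
  have h : ‖Complex.exp (-w)‖ ≤ 1 := by simpa [Complex.norm_exp] using hw
  calc ‖Complex.exp (-w) - 1‖ ≤ ‖Complex.exp (-w)‖ + ‖(1 : ℂ)‖ := norm_sub_le _ _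
    _ ≤ 2 := by rw [norm_one]; linarith

/-- The integrable majorant `min 2 (C t) * t ^ (-1 - α)`. -/
lemma integrableOn_min_mul_rpow {α : ℝ} (hα0 : 0 < α) (hα1 : α < 1) {C : ℝ} (hC : 0 ≤ C) :
    IntegrableOn (fun t : ℝ => min 2 (C * t) * t ^ (-1 - α)) (Ioi 0) := by
  have hmeas : Measurable (fun t : ℝ => min 2 (C * t) * t ^ (-1 - α)) := by fun_prop
  rw [← Ioc_union_Ioi_eq_Ioi (zero_le_one' ℝ)]
  refine IntegrableOn.union ?_ ?_
  · have h : IntegrableOn (fun t : ℝ => C * t ^ (-α)) (Ioc 0 1) := by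
      have := intervalIntegral.intervalIntegrable_rpow' (a := 0) (b := 1) (r := -α) (by linarith)
      rw [intervalIntegrable_iff_integrableOn_Ioc_of_le zero_le_one] at this
      exact this.const_mul C
    refine Integrable.mono' h hmeas.aestronglyMeasurable ?_
    refine (ae_restrict_iff' measurableSet_Ioc).2 (ae_of_all _ fun t ht => ?_)
    have ht0 : 0 < t := ht.1
    rw [Real.norm_of_nonneg (by positivity)]
    calc min 2 (C * t) * t ^ (-1 - α) ≤ (C * t) * t ^ (-1 - α) := by
          gcongr; exact min_le_right _ _
      _ = C * t ^ (-α) := by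
          rw [mul_assoc, ← Real.rpow_one_add' ht0.le (by linarith)]
          congr 2; ring
  · have h : IntegrableOn (fun t : ℝ => 2 * t ^ (-1 - α)) (Ioi 1) :=
      (integrableOn_Ioi_rpow_of_lt (by linarith) zero_lt_one).const_mul 2
    refine Integrable.mono' h hmeas.aestronglyMeasurable ?_
    refine (ae_restrict_iff' measurableSet_Ioi).2 (ae_of_all _ fun t ht => ?_)
    have ht0 : 0 < t := zero_lt_one.trans ht
    rw [Real.norm_of_nonneg (by positivity)]
    gcongr
    exact min_le_left _ _

lemma norm_exp_neg_mul_sub_one_mul_rpow_le (α : ℝ) {z : ℂ} (hz : 0 ≤ z.re) {C : ℝ} (hC : ‖z‖ ≤ C)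
    {t : ℝ} (ht : 0 < t) :
    ‖(Complex.exp (-(z * t)) - 1) * ((t ^ (-1 - α) : ℝ) : ℂ)‖
      ≤ min 2 (C * t) * t ^ (-1 - α) := by
  have hre : 0 ≤ (z * t).re := by simpa using mul_nonneg hz ht.le
  rw [norm_mul, Complex.norm_real, Real.norm_of_nonneg (by positivity : 0 ≤ t ^ (-1 - α))]
  gcongr
  refine le_min (norm_exp_neg_sub_one_le_two hre) ((norm_exp_neg_sub_one_le_norm hre).trans ?_)
  rw [norm_mul, Complex.norm_real, Real.norm_of_nonneg ht.le]
  gcongr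

lemma integrableOn_exp_neg_mul_sub_one_mul_rpow {α : ℝ} (hα0 : 0 < α) (hα1 : α < 1) {z : ℂ}
    (hz : 0 ≤ z.re) :
    IntegrableOn (fun t : ℝ => (Complex.exp (-(z * t)) - 1) * ((t ^ (-1 - α) : ℝ) : ℂ))
      (Ioi 0) := by
  refine Integrable.mono' (integrableOn_min_mul_rpow hα0 hα1 (norm_nonneg z))
    (by fun_prop : Measurable _).aestronglyMeasurable ?_
  exact (ae_restrict_iff' measurableSet_Ioi).2
    (ae_of_all _ fun t ht => norm_exp_neg_mul_sub_one_mul_rpow_le α hz le_rfl ht)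

lemma integrableOn_rpow_neg_mul_exp_neg_mul {α : ℝ} (hα1 : α < 1) {r : ℝ} (hr : 0 < r) :
    IntegrableOn (fun t : ℝ => t ^ (-α) * Real.exp (-r * t)) (Ioi 0) := by
  simpa using integrableOn_rpow_mul_exp_neg_mul_rpow (p := 1) (s := -α) (by linarith)
    one_pos hr

/-- The integral depends holomorphically on `z` in the open right half-plane. -/
lemma differentiableOn_integral_exp_neg_mul_sub_one_mul_rpow {α : ℝ} (hα0 : 0 < α) (hα1 : α < 1) :
    DifferentiableOn ℂ (fun z : ℂ => ∫ t in Ioi (0 : ℝ),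
      (Complex.exp (-(z * t)) - 1) * ((t ^ (-1 - α) : ℝ) : ℂ)) {z | 0 < z.re} := by
  intro z hz
  have hz' : 0 < z.re := hz
  have hs : {w : ℂ | z.re / 2 < w.re} ∈ 𝓝 z :=
    (isOpen_lt continuous_const Complex.continuous_re).mem_nhds (by simpa using hz')
  refine (hasDerivAt_integral_of_dominated_loc_of_deriv_le (μ := volume.restrict (Ioi (0 : ℝ)))
    (F := fun w t => (Complex.exp (-(w * t)) - 1) * ((t ^ (-1 - α) : ℝ) : ℂ))
    (F' := fun w t => Complex.exp (-(w * t)) * -(1 * (t : ℂ)) * ((t ^ (-1 - α) : ℝ) : ℂ))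
    (bound := fun t => t ^ (-α) * Real.exp (-(z.re / 2) * t)) hs
    (Eventually.of_forall fun w => (by fun_prop : Measurable _).aestronglyMeasurable)
    (integrableOn_exp_neg_mul_sub_one_mul_rpow hα0 hα1 hz'.le)
    (by fun_prop : Measurable _).aestronglyMeasurable ?_
    (integrableOn_rpow_neg_mul_exp_neg_mul hα1 (half_pos hz'))
    (ae_of_all _ fun t w _ => ?_)).2.differentiableAt.differentiableWithinAt
  · refine (ae_restrict_iff' measurableSet_Ioi).2 (ae_of_all _ fun t ht w hw => ?_)
    have ht0 : 0 < t := ht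
    have hw' : z.re / 2 < w.re := hw
    have hpow : t * t ^ (-1 - α) = t ^ (-α) := by
      rw [← Real.rpow_one_add' ht0.le (by linarith)]
      congr 1; ring
    rw [norm_mul, norm_mul, Complex.norm_exp, Complex.norm_real,
      Real.norm_of_nonneg (by positivity : 0 ≤ t ^ (-1 - α)), one_mul, norm_neg, Complex.norm_real,
      Real.norm_of_nonneg ht0.le, mul_assoc, hpow, mul_comm]
    gcongr
    simp only [Complex.neg_re, Complex.re_mul_ofReal]
    nlinarith
  · exact ((((hasDerivAt_id w).mul_const (t : ℂ)).neg.cexp).sub_const 1).mul_const _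

/-- The formula on the positive real axis, by integration by parts. -/
lemma integral_exp_neg_mul_sub_one_mul_rpow_ofReal {α : ℝ} (hα0 : 0 < α) (hα1 : α < 1) {r : ℝ}
    (hr : 0 < r) :
    ∫ t in Ioi (0 : ℝ), (Complex.exp (-((r : ℂ) * t)) - 1) * ((t ^ (-1 - α) : ℝ) : ℂ)
      = (Real.Gamma (-α) : ℂ) * (r : ℂ) ^ (α : ℂ) := by
  have hrre : 0 ≤ (r : ℂ).re := by simpa using hr.le
  have hnorm : ∀ t : ℝ, 0 < t → ‖(((-t ^ (-α) / α : ℝ)) : ℂ)‖ = t ^ (-α) / α := fun t ht => by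
    rw [Complex.norm_real, neg_div, norm_neg, Real.norm_of_nonneg (by positivity)]
  have hu : ∀ t ∈ Ioi (0 : ℝ), HasDerivAt (fun t : ℝ => Complex.exp (-((r : ℂ) * t)) - 1)
      (Complex.exp (-((r : ℂ) * t)) * -((r : ℂ) * 1)) t := fun t _ =>
    (((Complex.ofRealCLM.hasDerivAt (x := t)).const_mul (r : ℂ)).neg.cexp).sub_const 1
  have hv : ∀ t ∈ Ioi (0 : ℝ), HasDerivAt (fun t : ℝ => ((-t ^ (-α) / α : ℝ) : ℂ))
      ((t ^ (-1 - α) : ℝ) : ℂ) t := fun t ht => by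
    have ht0 : 0 < t := ht
    have h := ((Real.hasDerivAt_rpow_const (p := -α) (Or.inl ht0.ne')).neg.div_const α).ofReal_comp
    convert! h using 2
    rw [show -α - 1 = -1 - α by ring]
    field_simp
  have hint : IntegrableOn ((fun t : ℝ => Complex.exp (-((r : ℂ) * t)) * -((r : ℂ) * 1)) *
      fun t : ℝ => ((-t ^ (-α) / α : ℝ) : ℂ)) (Ioi 0) := by
    have h := ((integrableOn_rpow_neg_mul_exp_neg_mul hα1 hr).const_mul (r / α)).ofReal (𝕜 := ℂ)
    refine h.congr (ae_of_all _ fun t => ?_)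
    change ((r / α * (t ^ (-α) * Real.exp (-r * t)) : ℝ) : ℂ) = _
    rw [Pi.mul_apply, neg_mul]
    push_cast
    ring
  have hzero : Tendsto ((fun t : ℝ => Complex.exp (-((r : ℂ) * t)) - 1) *
      fun t : ℝ => ((-t ^ (-α) / α : ℝ) : ℂ)) (𝓝[>] 0) (𝓝 0) := by
    have hlim : Tendsto (fun t : ℝ => r / α * t ^ (1 - α)) (𝓝[>] 0) (𝓝 0) := by
      have h := (Real.continuousAt_rpow_const 0 (1 - α) (Or.inr (by linarith))).tendsto.const_mul
        (r / α)
      rw [Real.zero_rpow (by linarith), mul_zero] at h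
      exact h.mono_left nhdsWithin_le_nhds
    refine squeeze_zero_norm' ?_ hlim
    filter_upwards [self_mem_nhdsWithin] with t ht
    have ht0 : 0 < t := ht
    rw [Pi.mul_apply, norm_mul, hnorm t ht]
    have h := norm_exp_neg_sub_one_le_norm (w := (r : ℂ) * t) (by simpa using by positivity)
    rw [norm_mul, Complex.norm_real, Complex.norm_real, Real.norm_of_nonneg hr.le,
      Real.norm_of_nonneg ht0.le] at h
    calc _ ≤ (r * t) * (t ^ (-α) / α) := by gcongr
      _ = r / α * t ^ (1 - α) := by
        rw [sub_eq_add_neg, Real.rpow_one_add' ht0.le (by linarith)]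
        ring
  have hinfty : Tendsto ((fun t : ℝ => Complex.exp (-((r : ℂ) * t)) - 1) *
      fun t : ℝ => ((-t ^ (-α) / α : ℝ) : ℂ)) atTop (𝓝 0) := by
    have hlim : Tendsto (fun t : ℝ => 2 * (t ^ (-α) / α)) atTop (𝓝 0) := by
      simpa using ((tendsto_rpow_neg_atTop hα0).div_const α).const_mul 2
    refine squeeze_zero_norm' ?_ hlim
    filter_upwards [eventually_gt_atTop 0] with t ht
    rw [Pi.mul_apply, norm_mul, hnorm t ht]
    gcongr
    exact norm_exp_neg_sub_one_le_two (by simpa using by positivity)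
  rw [integral_Ioi_mul_deriv_eq_deriv_mul hu hv
    (integrableOn_exp_neg_mul_sub_one_mul_rpow hα0 hα1 hrre) hint hzero hinfty]
  have hG := Complex.integral_cpow_mul_exp_neg_mul_Ioi (a := ((1 - α : ℝ) : ℂ)) (r := r)
    (by simpa using hα1) hr
  have hΓ : Real.Gamma (1 - α) = -α * Real.Gamma (-α) := by
    rw [← Real.Gamma_add_one (by linarith)]
    congr 1; ring
  have hα : (α : ℂ) ≠ 0 := by exact_mod_cast hα0.ne'
  have hr' : (r : ℂ) ≠ 0 := by exact_mod_cast hr.ne'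
  have hint_eq : ∫ t in Ioi (0 : ℝ), Complex.exp (-((r : ℂ) * t)) * -((r : ℂ) * 1) *
      ((-t ^ (-α) / α : ℝ) : ℂ) = (r / α : ℂ) * ∫ t in Ioi (0 : ℝ),
        (t : ℂ) ^ (((1 - α : ℝ) : ℂ) - 1) * Complex.exp (-(r * t)) := by
    rw [← integral_const_mul]
    refine setIntegral_congr_fun measurableSet_Ioi fun t ht => ?_
    have ht0 : 0 < t := ht
    have h : (t : ℂ) ^ (((1 - α : ℝ) : ℂ) - 1) = ((t ^ (-α) : ℝ) : ℂ) := by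
      rw [Complex.ofReal_cpow ht0.le]
      congr 1; push_cast; ring
    simp only [h]
    push_cast
    ring
  have hpow : (1 / r : ℂ) ^ (((1 - α : ℝ)) : ℂ) = (r : ℂ) ^ (α : ℂ) / r := by
    rw [← Complex.ofReal_one, ← Complex.ofReal_div, ← Complex.ofReal_cpow (by positivity),
      ← Complex.ofReal_cpow hr.le, ← Complex.ofReal_div, one_div, Real.inv_rpow hr.le,
      ← Real.rpow_neg hr.le, neg_sub, Real.rpow_sub_one hr.ne']
  rw [hint_eq, hG, hpow, Complex.Gamma_ofReal, hΓ]
  push_cast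
  field_simp
  ring

/-- The formula in the open right half-plane, by analytic continuation. -/
lemma integral_exp_neg_mul_sub_one_mul_rpow {α : ℝ} (hα0 : 0 < α) (hα1 : α < 1) {z : ℂ}
    (hz : 0 < z.re) :
    ∫ t in Ioi (0 : ℝ), (Complex.exp (-(z * t)) - 1) * ((t ^ (-1 - α) : ℝ) : ℂ)
      = (Real.Gamma (-α) : ℂ) * z ^ (α : ℂ) := by
  have hopen : IsOpen {z : ℂ | 0 < z.re} := isOpen_lt continuous_const Complex.continuous_re
  have hf := (differentiableOn_integral_exp_neg_mul_sub_one_mul_rpow hα0 hα1).analyticOnNhd hopen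
  have hg : AnalyticOnNhd ℂ (fun z : ℂ => (Real.Gamma (-α) : ℂ) * z ^ (α : ℂ))
      {z : ℂ | 0 < z.re} := by
    refine DifferentiableOn.analyticOnNhd (fun w hw => ?_) hopen
    exact ((differentiableAt_id.cpow_const (Or.inl hw)).const_mul _).differentiableWithinAt
  have hmaps : Tendsto (fun r : ℝ => (r : ℂ)) (𝓝[>] 1) (𝓝[≠] 1) := by
    refine tendsto_nhdsWithin_of_tendsto_nhds_of_eventually_within _ ?_ ?_
    · exact (Complex.continuous_ofReal.tendsto' 1 1 (by simp)).mono_left nhdsWithin_le_nhds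
    · filter_upwards [self_mem_nhdsWithin] with r hr
      simpa using (ne_of_gt hr : r ≠ 1)
  refine hf.eqOn_of_preconnected_of_frequently_eq hg
    (convex_halfSpace_re_gt 0).isPreconnected (z₀ := 1) (by simp) ?_ hz
  refine hmaps.frequently (Eventually.frequently ?_)
  filter_upwards [self_mem_nhdsWithin] with r hr
  exact integral_exp_neg_mul_sub_one_mul_rpow_ofReal hα0 hα1 (zero_lt_one.trans hr)

/-- The formula on the imaginary axis, as a boundary value from the right half-plane. -/
lemma integral_exp_neg_I_mul_sub_one_mul_rpow {α : ℝ} (hα0 : 0 < α) (hα1 : α < 1) {l : ℝ}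
    (hl : l ≠ 0) :
    ∫ t in Ioi (0 : ℝ), (Complex.exp (-(Complex.I * l * t)) - 1) * ((t ^ (-1 - α) : ℝ) : ℂ)
      = (Real.Gamma (-α) : ℂ) * (Complex.I * l) ^ (α : ℂ) := by
  have hpath : Tendsto (fun ε : ℝ => (ε : ℂ) + Complex.I * l) (𝓝[>] 0) (𝓝 (Complex.I * l)) :=
    (Continuous.tendsto' (by fun_prop) 0 _ (by simp)).mono_left nhdsWithin_le_nhds
  have hslit : Complex.I * (l : ℂ) ∈ Complex.slitPlane := Or.inr (by simpa using hl)
  have hright : Tendsto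
      (fun ε : ℝ => (Real.Gamma (-α) : ℂ) * ((ε : ℂ) + Complex.I * l) ^ (α : ℂ)) (𝓝[>] 0)
      (𝓝 ((Real.Gamma (-α) : ℂ) * (Complex.I * l) ^ (α : ℂ))) :=
    ((continuousAt_cpow_const hslit).tendsto.comp hpath).const_mul _
  have hleft : Tendsto (fun ε : ℝ => ∫ t in Ioi (0 : ℝ),
      (Complex.exp (-(((ε : ℂ) + Complex.I * l) * t)) - 1) * ((t ^ (-1 - α) : ℝ) : ℂ)) (𝓝[>] 0)
      (𝓝 (∫ t in Ioi (0 : ℝ),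
        (Complex.exp (-(Complex.I * l * t)) - 1) * ((t ^ (-1 - α) : ℝ) : ℂ))) := by
    refine tendsto_integral_filter_of_dominated_convergence
      (fun t => min 2 ((‖Complex.I * (l : ℂ)‖ + 1) * t) * t ^ (-1 - α))
      (Eventually.of_forall fun ε => (by fun_prop : Measurable _).aestronglyMeasurable) ?_
      (integrableOn_min_mul_rpow hα0 hα1 (by positivity)) (ae_of_all _ fun t => ?_)
    · filter_upwards [self_mem_nhdsWithin,
        hpath.norm.eventually (eventually_le_nhds (lt_add_one _))] with ε hε hle
      have hre : 0 ≤ ((ε : ℂ) + Complex.I * l).re := by simpa using le_of_lt hε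
      exact (ae_restrict_iff' measurableSet_Ioi).2
        (ae_of_all _ fun t ht => norm_exp_neg_mul_sub_one_mul_rpow_le α hre hle ht)
    · have hcont : Continuous fun z : ℂ =>
          (Complex.exp (-(z * t)) - 1) * ((t ^ (-1 - α) : ℝ) : ℂ) := by fun_prop
      exact (hcont.tendsto _).comp hpath
  refine tendsto_nhds_unique hleft (hright.congr' ?_)
  filter_upwards [self_mem_nhdsWithin] with ε hε
  exact (integral_exp_neg_mul_sub_one_mul_rpow hα0 hα1 (by simpa using hε)).symm

/-- for `0 < α < 1` and a nonzero real `λ`,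
`(iλ)^α = (1/Γ(-α)) ∫_0^∞ (e^{-itλ} - 1) t^{-1-α} dt`, where `(iλ)^α` is the principal
branch of the complex power and the complex-valued integral converges absolutely. -/
theorem gamma_formula_imaginary_power
    (α l : ℝ) (hα0 : 0 < α) (hα1 : α < 1) (hl : l ≠ 0) :
    Integrable (fun t : ℝ =>
      (Complex.exp (-Complex.I * t * l) - 1) * ((t ^ (-1 - α) : ℝ) : ℂ))
      (volume.restrict (Ioi 0)) ∧
    (Complex.I * (l : ℂ)) ^ (α : ℂ) = (1 / (Real.Gamma (-α) : ℂ)) *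
      ∫ t in Ioi (0 : ℝ),
        (Complex.exp (-Complex.I * t * l) - 1) * ((t ^ (-1 - α) : ℝ) : ℂ) := by
  have hexp : ∀ t : ℝ, -Complex.I * t * l = -(Complex.I * l * t) := fun t => by ring
  simp only [hexp]
  refine ⟨integrableOn_exp_neg_mul_sub_one_mul_rpow hα0 hα1 (by simp), ?_⟩
  have hΓ : (Real.Gamma (-α) : ℂ) ≠ 0 := by
    refine Complex.ofReal_ne_zero.2 (Real.Gamma_ne_zero fun m hm => ?_)
    have hm0 : (0 : ℝ) < m := by linarith
    have hm1 : (m : ℝ) < 1 := by linarith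
    norm_cast at hm0 hm1
    omega
  rw [integral_exp_neg_I_mul_sub_one_mul_rpow hα0 hα1 hl, one_div, inv_mul_cancel_left₀ hΓ]
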